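/- arXiv:2006.06643 — 3 statements merged into one kernel-verified Lean document; each statement's English description precedes it below -/
import Mathlib

section
/- Let f : ℝ^d → ℝ (Euclidean space) be measurable and bounded, and let σ > 0. Then the smoothed function F_σ(x) = ∫ f(z) dN(x, σ²I)(z) is differentiable at every x, with gradient ∇F_σ(x) = σ^(−2) ∫ (z − x) f(z) dN(x, σ²I)(z). -/
open MeasureTheory Metric

/-- The density of the isotropic Gaussian `N(0, σ²I)` on `ℝ^d`, evaluated at `u`. -/
noncomputable def gaussDensity {d : ℕ} (σ : ℝ) (u : EuclideanSpace ℝ (Fin d)) : ℝ :=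
  (2 * Real.pi * σ ^ 2) ^ (-(d : ℝ) / 2) * Real.exp (-‖u‖ ^ 2 / (2 * σ ^ 2))

theorem aux_integrable {d : ℕ} (b : ℝ) (hb : 0 < b) (x : EuclideanSpace ℝ (Fin d)) :
    Integrable (fun z : EuclideanSpace ℝ (Fin d) => Real.exp (-b * ‖z - x‖ ^ 2)) := by
  have h := (GaussianFourier.integrable_cexp_neg_mul_sq_norm_add (b := (b : ℂ))
    (by simpa using hb) 0 (0 : EuclideanSpace ℝ (Fin d))).norm
  have h2 : Integrable (fun z : EuclideanSpace ℝ (Fin d) => Real.exp (-b * ‖z‖ ^ 2)) := by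
    refine h.congr (Filter.Eventually.of_forall fun z => ?_)
    simp only [Complex.norm_exp]
    congr 1
    simp [← Complex.ofReal_pow]
  exact h2.comp_sub_right x

theorem aux_bound {E : Type*} [NormedAddCommGroup E] (a : ℝ) (ha : 0 < a) (x y z : E)
    (hy : ‖y - x‖ < 1) :
    ‖z - y‖ * Real.exp (-a * ‖z - y‖ ^ 2) ≤
      ((1 + 2 / a) * Real.exp (a / 2)) * Real.exp (-(a / 4) * ‖z - x‖ ^ 2) := by
  set t := ‖z - y‖ with ht
  have ht0 : 0 ≤ t := norm_nonneg _
  have h1 : ‖z - x‖ ≤ t + ‖y - x‖ := by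
    have := norm_add_le (z - y) (y - x)
    simpa using this
  have h0 := norm_nonneg (z - x)
  have h0' := norm_nonneg (y - x)
  have h2 : ‖z - x‖ ^ 2 ≤ 2 * t ^ 2 + 2 := by
    nlinarith [sq_nonneg (t - 1)]
  have h3 : t ≤ (1 + 2 / a) * Real.exp (a / 2 * t ^ 2) := by
    have e := Real.add_one_le_exp (a / 2 * t ^ 2)
    calc t ≤ 1 + t ^ 2 := by nlinarith [sq_nonneg (t - 1)]
      _ ≤ (1 + 2 / a) * (a / 2 * t ^ 2 + 1) := by
        have : (1 + 2 / a) * (a / 2 * t ^ 2 + 1) = 1 + t ^ 2 + (a / 2 * t ^ 2 + 2 / a) := by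
          field_simp; ring
        rw [this]
        have : 0 ≤ a / 2 * t ^ 2 + 2 / a := by positivity
        linarith
      _ ≤ _ := by gcongr
  calc t * Real.exp (-a * t ^ 2)
      ≤ (1 + 2 / a) * Real.exp (a / 2 * t ^ 2) * Real.exp (-a * t ^ 2) := by gcongr
    _ = (1 + 2 / a) * Real.exp (a / 2 * t ^ 2 + -a * t ^ 2) := by rw [Real.exp_add]; ring
    _ ≤ (1 + 2 / a) * Real.exp (a / 2 + -(a / 4) * ‖z - x‖ ^ 2) := by
      gcongr (1 + 2 / a) * Real.exp ?_
      nlinarith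
    _ = _ := by rw [Real.exp_add]; ring

theorem aux_eq {d : ℕ} (σ : ℝ) (u : EuclideanSpace ℝ (Fin d)) :
    gaussDensity σ u = (2 * Real.pi * σ ^ 2) ^ (-(d : ℝ) / 2) *
      Real.exp (-(1 / (2 * σ ^ 2)) * ‖u‖ ^ 2) := by
  unfold gaussDensity
  congr 2
  ring

theorem aux_meas {d : ℕ} (σ : ℝ) (y : EuclideanSpace ℝ (Fin d)) :
    Measurable fun z : EuclideanSpace ℝ (Fin d) => gaussDensity σ (z - y) := by
  unfold gaussDensity
  fun_prop

theorem aux_deriv {d : ℕ} (σ : ℝ) (hσ : 0 < σ) (c : ℝ) (z y : EuclideanSpace ℝ (Fin d)) :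
    HasFDerivAt (fun y => gaussDensity σ (z - y) * c)
      (innerSL ℝ (((σ ^ 2)⁻¹ * (gaussDensity σ (z - y) * c)) • (z - y))) y := by
  have h1 : HasFDerivAt (fun y : EuclideanSpace ℝ (Fin d) => z - y)
      (-ContinuousLinearMap.id ℝ _) y := (hasFDerivAt_id y).const_sub z
  have h2 := ((((h1.norm_sq).const_mul (-(1 / (2 * σ ^ 2)))).exp).const_mul
    ((2 * Real.pi * σ ^ 2) ^ (-(d : ℝ) / 2))).mul_const c
  simp only [aux_eq]
  refine h2.congr_fderiv ?_
  ext v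
  simp
  field_simp
  ring

theorem smoothed_function_hasGradient {d : ℕ} (f : EuclideanSpace ℝ (Fin d) → ℝ)
    (σ : ℝ) (hσ : 0 < σ) (hf : Measurable f) (C : ℝ) (hfb : ∀ z, |f z| ≤ C)
    (x : EuclideanSpace ℝ (Fin d)) :
    HasGradientAt (fun y => ∫ z, gaussDensity σ (z - y) * f z)
      ((σ ^ 2)⁻¹ • ∫ z, gaussDensity σ (z - x) • (f z • (z - x))) x := by
  set K : ℝ := (2 * Real.pi * σ ^ 2) ^ (-(d : ℝ) / 2) with hK
  have hK0 : 0 ≤ K := by positivity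
  set a : ℝ := 1 / (2 * σ ^ 2) with ha
  have ha0 : 0 < a := by positivity
  set g : EuclideanSpace ℝ (Fin d) → EuclideanSpace ℝ (Fin d) → EuclideanSpace ℝ (Fin d) :=
    fun y z => ((σ ^ 2)⁻¹ * (gaussDensity σ (z - y) * f z)) • (z - y) with hg
  set bound : EuclideanSpace ℝ (Fin d) → ℝ := fun z =>
    ((σ ^ 2)⁻¹ * K * C * ((1 + 2 / a) * Real.exp (a / 2))) *
      Real.exp (-(a / 4) * ‖z - x‖ ^ 2) with hbound
  have hC : 0 ≤ C := (abs_nonneg _).trans (hfb 0)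
  have hb : ∀ z, ∀ y ∈ ball x 1, ‖g y z‖ ≤ bound z := by
    intro z y hy
    rw [mem_ball, dist_eq_norm] at hy
    have h := aux_bound a ha0 x y z hy
    simp only [hg, hbound, aux_eq, norm_smul, norm_mul, Real.norm_eq_abs, Real.abs_exp]
    rw [← hK, ← ha, abs_of_nonneg hK0, abs_of_nonneg (by positivity : 0 ≤ (σ ^ 2)⁻¹)]
    calc _ = (σ ^ 2)⁻¹ * K * |f z| * (‖z - y‖ * Real.exp (-a * ‖z - y‖ ^ 2)) := by ring
      _ ≤ (σ ^ 2)⁻¹ * K * C * (((1 + 2 / a) * Real.exp (a / 2)) *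
          Real.exp (-(a / 4) * ‖z - x‖ ^ 2)) := by
        gcongr
        exact hfb z
      _ = _ := by ring
  have hbi : Integrable bound := (aux_integrable (a / 4) (by positivity) x).const_mul _
  have hgm : Measurable (g x) := by
    have := aux_meas σ x
    simp only [hg]
    fun_prop
  have hgi : Integrable (g x) := hbi.mono' hgm.aestronglyMeasurable
    (Filter.Eventually.of_forall fun z => hb z x (mem_ball_self one_pos))
  have hF'm : AEStronglyMeasurable (fun z => innerSL ℝ (g x z)) volume :=
    (innerSL ℝ).continuous.comp_aestronglyMeasurable hgm.aestronglyMeasurable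
  have hF'i : Integrable (fun z => innerSL ℝ (g x z)) :=
    hbi.mono' hF'm (Filter.Eventually.of_forall fun z => by
      rw [innerSL_apply_norm]; exact hb z x (mem_ball_self one_pos))
  have hFm : ∀ y, AEStronglyMeasurable (fun z => gaussDensity σ (z - y) * f z) volume :=
    fun y => ((aux_meas σ y).mul hf).aestronglyMeasurable
  have hFi : Integrable (fun z => gaussDensity σ (z - x) * f z) := by
    refine ((aux_integrable a ha0 x).const_mul (K * C)).mono' (hFm x)
      (Filter.Eventually.of_forall fun z => ?_)
    simp only [aux_eq, norm_mul, Real.norm_eq_abs, Real.abs_exp]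
    rw [← hK, ← ha, abs_of_nonneg hK0]
    calc _ ≤ K * Real.exp (-a * ‖z - x‖ ^ 2) * C := by gcongr; exact hfb z
      _ = _ := by ring
  have key := hasFDerivAt_integral_of_dominated_of_fderiv_le (𝕜 := ℝ) (μ := volume)
    (F := fun y z => gaussDensity σ (z - y) * f z) (F' := fun y z => innerSL ℝ (g y z))
    (bound := bound) (ball_mem_nhds x one_pos) (Filter.Eventually.of_forall hFm) hFi hF'm
    (Filter.Eventually.of_forall fun z y hy => by rw [innerSL_apply_norm]; exact hb z y hy) hbi
    (Filter.Eventually.of_forall fun z y _ => aux_deriv σ hσ (f z) z y)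
  rw [hasGradientAt_iff_hasFDerivAt]
  refine key.congr_fderiv ?_
  have e : (σ ^ 2)⁻¹ • ∫ z, gaussDensity σ (z - x) • (f z • (z - x)) = ∫ z, g x z := by
    rw [← integral_smul]
    simp only [hg, smul_smul, mul_assoc]
  rw [e]
  ext1 v
  rw [ContinuousLinearMap.integral_apply hF'i, InnerProductSpace.toDual_apply_apply,
    real_inner_comm, ← integral_inner hgi]
  simp only [innerSL_apply_apply]
  exact integral_congr_ae (Filter.Eventually.of_forall fun z => real_inner_comm _ _)
end

section
/- Let f : ℝ^d → ℝ (Euclidean space) be measurable with sup_{x ∈ ℝ^d} |f(x)| = F < ∞, let σ > 0, and let g(x) = ∇_x F_σ(x) be the gradient of the smoothed function F_σ(x) = ∫ f(z) dN(x, σ²I)(z). Then g is globally Lipschitz with constant at most 2F/σ²: for all x, x' ∈ ℝ^d, ‖g(x) − g(x')‖₂ ≤ (2F/σ²)·‖x − x'‖₂. (That is, the Smooth Gradient with standard deviation σ is λ-globally robust with λ ≤ 2F/σ².) -/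
open MeasureTheory Metric

section helpers

open Real


lemma sg_int_exp {d : ℕ} {c : ℝ} (hc : 0 < c) :
    Integrable (fun u : EuclideanSpace ℝ (Fin d) => Real.exp (-c * ‖u‖ ^ 2)) := by
  by_contra h
  have h1 := GaussianFourier.integral_rexp_neg_mul_sq_norm (V := EuclideanSpace ℝ (Fin d)) hc
  rw [integral_undef h] at h1
  have : 0 < (π / c) ^ ((Module.finrank ℝ (EuclideanSpace ℝ (Fin d)) : ℝ) / 2) := by positivity
  linarith

lemma sg_int_of_bound {d : ℕ} {c C : ℝ} (hc : 0 < c) {G : Type*} [NormedAddCommGroup G]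
    {K : (EuclideanSpace ℝ (Fin d)) → G}
    (hK : AEStronglyMeasurable K volume) (hb : ∀ u, ‖K u‖ ≤ C * Real.exp (-c * ‖u‖ ^ 2)) :
    Integrable K :=
  ((sg_int_exp hc).const_mul C).mono' hK (Filter.Eventually.of_forall hb)

lemma sg_shift {d : ℕ} {c : ℝ} (hc : 0 < c) (z x y : EuclideanSpace ℝ (Fin d)) (h : ‖y - x‖ ≤ 1) :
    Real.exp (-c * ‖z - y‖ ^ 2) ≤ Real.exp c * Real.exp (-(c/2) * ‖z - x‖ ^ 2) := by
  rw [← Real.exp_add]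
  apply Real.exp_le_exp.2
  have h1 : ‖z - x‖ ≤ ‖z - y‖ + 1 := by
    calc ‖z - x‖ = ‖(z - y) + (y - x)‖ := by congr 1; abel
      _ ≤ ‖z - y‖ + ‖y - x‖ := norm_add_le _ _
      _ ≤ _ := by linarith
  have h2 : ‖z - x‖ ^ 2 ≤ 2 * ‖z - y‖ ^ 2 + 2 := by
    nlinarith [norm_nonneg (z - x), norm_nonneg (z - y), sq_nonneg (‖z - y‖ - 1)]
  nlinarith

lemma sg_deriv {d : ℕ} (f : (EuclideanSpace ℝ (Fin d)) → ℝ) (F : ℝ) (hf : Measurable f) (hfb : ∀ z, |f z| ≤ F)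
    (K : (EuclideanSpace ℝ (Fin d)) → ℝ) (K' : (EuclideanSpace ℝ (Fin d)) → (EuclideanSpace ℝ (Fin d)) →L[ℝ] ℝ) (hK : ∀ u, HasFDerivAt K (K' u) u)
    (hK'c : Continuous K') {c C : ℝ} (hc : 0 < c)
    (hb : ∀ u, |K u| ≤ C * Real.exp (-c * ‖u‖ ^ 2))
    (hb' : ∀ u, ‖K' u‖ ≤ C * Real.exp (-c * ‖u‖ ^ 2)) (x : EuclideanSpace ℝ (Fin d)) :
    HasFDerivAt (fun y => ∫ z, K (z - y) * f z) (∫ z, (-f z) • K' (z - x)) x := by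
  have hF : 0 ≤ F := (abs_nonneg _).trans (hfb 0)
  have hKc : Continuous K := continuous_iff_continuousAt.2 fun u => (hK u).continuousAt
  have hC : 0 ≤ C := by
    have := (norm_nonneg _).trans (hb' 0)
    simpa using this
  refine hasFDerivAt_integral_of_dominated_of_fderiv_le (s := ball x 1)
    (bound := fun z => F * (C * (Real.exp c * Real.exp (-(c/2) * ‖z - x‖ ^ 2))))
    (F' := fun y z => (-f z) • K' (z - y)) (ball_mem_nhds x one_pos) ?_ ?_ ?_ ?_ ?_ ?_
  · refine Filter.Eventually.of_forall fun y => ?_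
    exact ((hKc.comp (continuous_id.sub continuous_const)).measurable.mul hf).aestronglyMeasurable
  · have : Integrable K := sg_int_of_bound hc hKc.aestronglyMeasurable hb
    exact (this.comp_sub_right x).mul_bdd (c := F) hf.aestronglyMeasurable
      (Filter.Eventually.of_forall hfb)
  · exact hf.neg.aestronglyMeasurable.smul
      (hK'c.comp (continuous_id.sub continuous_const)).aestronglyMeasurable
  · refine Filter.Eventually.of_forall fun z y hy => ?_
    rw [norm_smul, norm_neg]
    have hy' : ‖y - x‖ ≤ 1 := by
      rw [mem_ball, dist_eq_norm] at hy; exact hy.le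
    have := sg_shift hc z x y hy'
    exact mul_le_mul (hfb z) ((hb' _).trans (by gcongr)) (norm_nonneg _) hF
  · exact ((((sg_int_exp (half_pos hc)).comp_sub_right x).const_mul _).const_mul _).const_mul _
  · refine Filter.Eventually.of_forall fun z y _ => ?_
    have h1 : HasFDerivAt (fun y : EuclideanSpace ℝ (Fin d) => z - y) (-ContinuousLinearMap.id ℝ (EuclideanSpace ℝ (Fin d))) y :=
      (hasFDerivAt_id y).const_sub z
    have h2 := ((hK (z - y)).comp y h1).mul_const (f z)
    refine h2.congr_fderiv ?_
    ext v
    simp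

lemma sg_poly {c : ℝ} (hc : 0 < c) (t : ℝ) :
    t * Real.exp (-(2 * c) * t) ≤ c⁻¹ * Real.exp (-c * t) := by
  have h : c * t ≤ Real.exp (c * t) := by linarith [Real.add_one_le_exp (c * t)]
  have h2 : Real.exp (-(2*c) * t) = Real.exp (-c*t) * Real.exp (-c*t) := by
    rw [← Real.exp_add]; ring_nf
  have h3 : Real.exp (c*t) * Real.exp (-c*t) = 1 := by rw [← Real.exp_add]; simp
  have h4 : t ≤ c⁻¹ * Real.exp (c * t) := by
    rw [inv_mul_eq_div, le_div_iff₀ hc]; linarith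
  calc t * Real.exp (-(2 * c) * t) ≤ (c⁻¹ * Real.exp (c * t)) * Real.exp (-(2 * c) * t) := by gcongr
    _ = c⁻¹ * (Real.exp (c*t) * Real.exp (-c*t)) * Real.exp (-c*t) := by rw [h2]; ring
    _ = _ := by rw [h3]; ring

lemma sg_poly2 {d : ℕ} {b A B : ℝ} (hb : 0 < b) (hA : 0 ≤ A) (hB : 0 ≤ B) (u : EuclideanSpace ℝ (Fin d)) :
    (A + B * ‖u‖ ^ 2) * Real.exp (-b * ‖u‖ ^ 2) ≤
      (A + B * (b/2)⁻¹) * Real.exp (-(b/2) * ‖u‖ ^ 2) := by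
  have h1 := sg_poly (half_pos hb) (‖u‖ ^ 2)
  have h2 : Real.exp (-b * ‖u‖ ^ 2) ≤ Real.exp (-(b/2) * ‖u‖ ^ 2) := by
    apply Real.exp_le_exp.2; nlinarith [sq_nonneg ‖u‖]
  rw [show -(2 * (b/2)) = -b by ring] at h1
  nlinarith [mul_le_mul_of_nonneg_left h1 hB, mul_le_mul_of_nonneg_left h2 hA]

lemma sg_cosh (a : ℝ) : 2 + a ^ 2 ≤ Real.exp a + Real.exp (-a) := by
  have key : ∀ a : ℝ, 0 ≤ a → 2 + a ^ 2 ≤ Real.exp a + Real.exp (-a) := by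
    intro a ha
    have h1 : a / 2 ≤ Real.sinh (a/2) := Real.self_le_sinh_iff.2 (by linarith)
    have h2 := Real.cosh_two_mul (a/2)
    have h3 := Real.cosh_sq (a/2)
    have h4 := Real.cosh_eq a
    rw [show 2 * (a/2) = a by ring] at h2
    nlinarith
  rcases le_total 0 a with h | h
  · exact key a h
  · have := key (-a) (by linarith)
    rw [neg_neg] at this
    nlinarith

lemma sg_int_sq {d : ℕ} {b : ℝ} (hb : 0 < b) (v w : EuclideanSpace ℝ (Fin d)) :
    Integrable (fun u : EuclideanSpace ℝ (Fin d) => |inner ℝ u v * inner ℝ u w| * Real.exp (-b * ‖u‖ ^ 2)) := by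
  refine sg_int_of_bound (half_pos hb) (C := 0 + (‖v‖ * ‖w‖) * (b/2)⁻¹)
    (Continuous.aestronglyMeasurable (by fun_prop)) fun u => ?_
  refine le_trans ?_ (sg_poly2 hb le_rfl (by positivity) u)
  rw [Real.norm_eq_abs, abs_of_nonneg (by positivity)]
  gcongr
  rw [abs_mul]
  calc |inner ℝ u v| * |inner ℝ u w| ≤ (‖u‖ * ‖v‖) * (‖u‖ * ‖w‖) := by
        gcongr <;> exact abs_real_inner_le_norm _ _
    _ = _ := by ring

lemma sg_second_aux {d : ℕ} {b : ℝ} (hb : 0 < b) (w : EuclideanSpace ℝ (Fin d)) :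
    (∫ u : EuclideanSpace ℝ (Fin d), Real.exp (-b * ‖u‖ ^ 2)) +
      2 * b ^ 2 * (∫ u : EuclideanSpace ℝ (Fin d), |inner ℝ u w * inner ℝ u w| * Real.exp (-b * ‖u‖ ^ 2)) ≤
      Real.exp (b * ‖w‖ ^ 2) * (∫ u : EuclideanSpace ℝ (Fin d), Real.exp (-b * ‖u‖ ^ 2)) := by
  have hi := sg_int_exp (d := d) hb
  have e1 := integral_add_right_eq_self (μ := volume)
    (fun u : EuclideanSpace ℝ (Fin d) => Real.exp (-b * ‖u‖ ^ 2)) w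
  have e2 := integral_sub_right_eq_self (μ := volume)
    (fun u : EuclideanSpace ℝ (Fin d) => Real.exp (-b * ‖u‖ ^ 2)) w
  have key : ∫ u : EuclideanSpace ℝ (Fin d), (Real.exp (-b * ‖u‖ ^ 2) +
      2 * b ^ 2 * (|inner ℝ u w * inner ℝ u w| * Real.exp (-b * ‖u‖ ^ 2))) ≤
      ∫ u : EuclideanSpace ℝ (Fin d), Real.exp (b * ‖w‖ ^ 2) / 2 *
        (Real.exp (-b * ‖u + w‖ ^ 2) + Real.exp (-b * ‖u - w‖ ^ 2)) := by
    refine integral_mono (hi.add ((sg_int_sq hb w w).const_mul _))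
      (((hi.comp_add_right w).add (hi.comp_sub_right w)).const_mul _) fun u => ?_
    simp only
    have h1 : Real.exp (b * ‖w‖ ^ 2) * Real.exp (-b * ‖u + w‖ ^ 2) =
        Real.exp (-b * ‖u‖ ^ 2) * Real.exp (-(2 * b * inner ℝ u w)) := by
      rw [← Real.exp_add, ← Real.exp_add, norm_add_sq_real]; ring_nf
    have h2 : Real.exp (b * ‖w‖ ^ 2) * Real.exp (-b * ‖u - w‖ ^ 2) =
        Real.exp (-b * ‖u‖ ^ 2) * Real.exp (2 * b * inner ℝ u w) := by
      rw [← Real.exp_add, ← Real.exp_add, norm_sub_sq_real]; ring_nf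
    have h3 := mul_le_mul_of_nonneg_left (sg_cosh (2 * b * inner ℝ u w))
      (Real.exp_pos (-b * ‖u‖ ^ 2)).le
    rw [abs_mul_self]
    nlinarith
  rw [integral_add hi ((sg_int_sq hb w w).const_mul _), integral_const_mul, integral_const_mul,
    integral_add (hi.comp_add_right w) (hi.comp_sub_right w), e1, e2] at key
  linarith

lemma sg_second {d : ℕ} {b : ℝ} (hb : 0 < b) (v : EuclideanSpace ℝ (Fin d)) :
    2 * b * (∫ u : EuclideanSpace ℝ (Fin d), |inner ℝ u v * inner ℝ u v| * Real.exp (-b * ‖u‖ ^ 2)) ≤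
      ‖v‖ ^ 2 * (∫ u : EuclideanSpace ℝ (Fin d), Real.exp (-b * ‖u‖ ^ 2)) := by
  set I := ∫ u : EuclideanSpace ℝ (Fin d), |inner ℝ u v * inner ℝ u v| * Real.exp (-b * ‖u‖ ^ 2) with hI
  set Z := ∫ u : EuclideanSpace ℝ (Fin d), Real.exp (-b * ‖u‖ ^ 2) with hZ
  have hZ0 : 0 < Z := by
    rw [hZ, GaussianFourier.integral_rexp_neg_mul_sq_norm hb]; positivity
  have hI0 : 0 ≤ I := integral_nonneg fun u => by positivity
  have h : ∀ s : ℝ, 2 * b ^ 2 * s ^ 2 * I ≤ (Real.exp (b * ‖v‖ ^ 2 * s ^ 2) - 1) * Z := by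
    intro s
    have := sg_second_aux hb (s • v)
    simp only [inner_smul_right, norm_smul, mul_pow, Real.norm_eq_abs, sq_abs] at this
    have e : ∀ u : EuclideanSpace ℝ (Fin d), |s * inner ℝ u v * (s * inner ℝ u v)| * Real.exp (-b * ‖u‖ ^ 2) =
        s ^ 2 * (|inner ℝ u v * inner ℝ u v| * Real.exp (-b * ‖u‖ ^ 2)) := by
      intro u
      rw [abs_mul_self, abs_mul_self]; ring
    simp only [e, integral_const_mul] at this
    rw [← hI, ← hZ, show b * (s ^ 2 * ‖v‖ ^ 2) = b * ‖v‖ ^ 2 * s ^ 2 by ring] at this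
    linarith
  set c := b * ‖v‖ ^ 2 with hc
  have hc0 : 0 ≤ c := by positivity
  set k := 2 * b ^ 2 * I / Z with hk
  have hk0 : 0 ≤ k := by positivity
  have hkZ : k * Z = 2 * b ^ 2 * I := by rw [hk]; field_simp
  have h' : ∀ t : ℝ, 0 < t → c * t < 1 → k * (1 - c * t) ≤ c := by
    intro t ht hct
    have h1 := h (Real.sqrt t)
    rw [Real.sq_sqrt ht.le] at h1
    have h2 : k * t ≤ Real.exp (c * t) - 1 := by
      have : k * t * Z ≤ (Real.exp (c * t) - 1) * Z := by
        calc k * t * Z = 2 * b ^ 2 * t * I := by rw [mul_right_comm, hkZ]; ring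
          _ ≤ _ := h1
      exact le_of_mul_le_mul_right this hZ0
    have h3 : Real.exp (c * t) * (1 - c * t) ≤ 1 := by
      have h4 := Real.add_one_le_exp (-(c * t))
      have h5 : Real.exp (c * t) * Real.exp (-(c * t)) = 1 := by rw [← Real.exp_add]; simp
      nlinarith [Real.exp_pos (c * t)]
    have h4 : k * t * (1 - c * t) ≤ c * t := by nlinarith
    have : k * (1 - c * t) * t ≤ c * t := by linarith
    exact le_of_mul_le_mul_right this ht
  have hkc : k ≤ c := by
    by_contra hlt
    push Not at hlt
    have hD : 0 < 2 * (k * c) + 1 := by positivity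
    set t := (k - c) / (2 * (k * c) + 1) with ht
    have ht0 : 0 < t := div_pos (by linarith) hD
    have htD : t * (2 * (k * c) + 1) = k - c := by rw [ht]; field_simp
    have hct : c * t < 1 := by
      rw [ht, ← mul_div_assoc, div_lt_one hD]; nlinarith
    have := h' t ht0 hct
    nlinarith [mul_nonneg hk0 hc0, mul_nonneg ht0.le (mul_nonneg hk0 hc0)]
  have : 2 * b ^ 2 * I ≤ c * Z := by rw [← hkZ]; gcongr
  have : b * (2 * b * I) ≤ b * (‖v‖ ^ 2 * Z) := by rw [hc] at this; linarith
  exact le_of_mul_le_mul_left this hb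

lemma sg_cross {d : ℕ} {b : ℝ} (hb : 0 < b) (v w : EuclideanSpace ℝ (Fin d)) :
    2 * b * (∫ u : EuclideanSpace ℝ (Fin d), |inner ℝ u v * inner ℝ u w| * Real.exp (-b * ‖u‖ ^ 2)) ≤
      ‖v‖ * ‖w‖ * (∫ u : EuclideanSpace ℝ (Fin d), Real.exp (-b * ‖u‖ ^ 2)) := by
  rcases eq_or_ne v 0 with rfl | hv
  · simp
  rcases eq_or_ne w 0 with rfl | hw
  · simp
  have hv0 := norm_pos_iff.2 hv
  have hw0 := norm_pos_iff.2 hw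
  have h1 := sg_second hb v
  have h2 := sg_second hb w
  have key : ∫ u : EuclideanSpace ℝ (Fin d), (2 * (‖v‖ * ‖w‖)) *
      (|inner ℝ u v * inner ℝ u w| * Real.exp (-b * ‖u‖ ^ 2)) ≤
      ∫ u : EuclideanSpace ℝ (Fin d), (‖w‖ ^ 2 * (|inner ℝ u v * inner ℝ u v| * Real.exp (-b * ‖u‖ ^ 2)) +
        ‖v‖ ^ 2 * (|inner ℝ u w * inner ℝ u w| * Real.exp (-b * ‖u‖ ^ 2))) := by
    refine integral_mono ((sg_int_sq hb v w).const_mul _)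
      (((sg_int_sq hb v v).const_mul _).add ((sg_int_sq hb w w).const_mul _)) fun u => ?_
    simp only [abs_mul]
    have := mul_nonneg (sq_nonneg (‖w‖ * |inner ℝ u v| - ‖v‖ * |inner ℝ u w|))
      (Real.exp_pos (-b * ‖u‖ ^ 2)).le
    linarith
  rw [integral_const_mul, integral_add ((sg_int_sq hb v v).const_mul _)
    ((sg_int_sq hb w w).const_mul _), integral_const_mul, integral_const_mul] at key
  have hp : 0 < 2 * (‖v‖ * ‖w‖) := by positivity
  refine le_of_mul_le_mul_left ?_ hp
  have h3 := mul_le_mul_of_nonneg_left h1 (sq_nonneg ‖w‖)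
  have h4 := mul_le_mul_of_nonneg_left h2 (sq_nonneg ‖v‖)
  have h5 := mul_le_mul_of_nonneg_left key (by positivity : 0 ≤ 2 * b)
  linarith

end helpers

section main


lemma sg_exp_deriv {d : ℕ} (A b : ℝ) (u : EuclideanSpace ℝ (Fin d)) :
    HasFDerivAt (fun u : EuclideanSpace ℝ (Fin d) => A * Real.exp (-b * ‖u‖ ^ 2))
      ((-(2 * b) * (A * Real.exp (-b * ‖u‖ ^ 2))) • innerSL ℝ u) u := by
  have h1 : HasFDerivAt (fun u : EuclideanSpace ℝ (Fin d) => ‖u‖ ^ 2) (2 • innerSL ℝ u) u :=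
    (hasStrictFDerivAt_norm_sq u).hasFDerivAt
  have h2 := ((h1.const_mul (-b)).exp).const_mul A
  refine h2.congr_fderiv ?_
  ext v
  simp
  ring

lemma sg_q_deriv {d : ℕ} (A b : ℝ) (v u : EuclideanSpace ℝ (Fin d)) :
    HasFDerivAt (fun u : EuclideanSpace ℝ (Fin d) => 2 * b * (A * Real.exp (-b * ‖u‖ ^ 2)) * inner ℝ u v)
      ((2 * b * (A * Real.exp (-b * ‖u‖ ^ 2))) •
        (innerSL ℝ v - (2 * b * inner ℝ u v) • innerSL ℝ u)) u := by
  have h1 : HasFDerivAt (fun u : EuclideanSpace ℝ (Fin d) => inner ℝ u v) (innerSL ℝ v) u := by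
    have := (innerSL ℝ v).hasFDerivAt (x := u)
    refine this.congr_of_eventuallyEq (Filter.Eventually.of_forall fun y => ?_)
    simp [real_inner_comm]
  have h2 := ((sg_exp_deriv A b u).const_mul (2 * b)).mul h1
  refine h2.congr_fderiv ?_
  ext w
  simp
  ring

lemma sg_main {d : ℕ} (f : (EuclideanSpace ℝ (Fin d)) → ℝ) (A b F : ℝ) (hA : 0 ≤ A) (hb : 0 < b)
    (hAZ : A * (∫ u : EuclideanSpace ℝ (Fin d), Real.exp (-b * ‖u‖ ^ 2)) = 1)
    (hf : Measurable f) (hfb : ∀ z, |f z| ≤ F) (x x' : EuclideanSpace ℝ (Fin d)) :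
    ‖gradient (fun y => ∫ z, A * Real.exp (-b * ‖z - y‖ ^ 2) * f z) x -
      gradient (fun y => ∫ z, A * Real.exp (-b * ‖z - y‖ ^ 2) * f z) x'‖ ≤
      4 * b * F * ‖x - x'‖ := by
  have hF : 0 ≤ F := (abs_nonneg _).trans (hfb 0)
  have hb2 := half_pos hb
  -- first derivative
  set P' : (EuclideanSpace ℝ (Fin d)) → (EuclideanSpace ℝ (Fin d)) →L[ℝ] ℝ :=
    fun u => (-(2 * b) * (A * Real.exp (-b * ‖u‖ ^ 2))) • innerSL ℝ u with hP'
  have hP'c : Continuous P' := by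
    have h1 : Continuous fun u : EuclideanSpace ℝ (Fin d) => -(2 * b) * (A * Real.exp (-b * ‖u‖ ^ 2)) := by fun_prop
    exact h1.smul (innerSL ℝ).continuous
  have hu : ∀ u : EuclideanSpace ℝ (Fin d), ‖u‖ ≤ 1 + 1 * ‖u‖ ^ 2 := fun u => by
    nlinarith [sq_nonneg (‖u‖ - 1), sq_nonneg ‖u‖]
  have hP'b : ∀ u, ‖P' u‖ ≤ ((A + 2 * b * A) * (1 + 1 * (b/2)⁻¹)) *
      Real.exp (-(b/2) * ‖u‖ ^ 2) := by
    intro u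
    have h1 := sg_poly2 hb zero_le_one zero_le_one u
    rw [hP']
    simp only [norm_smul, innerSL_apply_norm, Real.norm_eq_abs, abs_mul, abs_neg, abs_two,
      abs_of_pos hb, abs_of_nonneg hA, Real.abs_exp]
    calc 2 * b * (A * Real.exp (-b * ‖u‖ ^ 2)) * ‖u‖
        ≤ 2 * b * (A * Real.exp (-b * ‖u‖ ^ 2)) * (1 + 1 * ‖u‖ ^ 2) := by gcongr; exact hu u
      _ = (0 + 2 * b * A) * ((1 + 1 * ‖u‖ ^ 2) * Real.exp (-b * ‖u‖ ^ 2)) := by ring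
      _ ≤ (A + 2 * b * A) * ((1 + 1 * (b/2)⁻¹) * Real.exp (-(b/2) * ‖u‖ ^ 2)) := by
          gcongr
      _ = _ := by ring
  have hPb : ∀ u : EuclideanSpace ℝ (Fin d), |A * Real.exp (-b * ‖u‖ ^ 2)| ≤
      ((A + 2 * b * A) * (1 + 1 * (b/2)⁻¹)) * Real.exp (-(b/2) * ‖u‖ ^ 2) := by
    intro u
    have h1 := sg_poly2 hb zero_le_one zero_le_one u
    rw [abs_of_nonneg (by positivity)]
    calc A * Real.exp (-b * ‖u‖ ^ 2)
        = (A + 0) * ((1 + 0) * Real.exp (-b * ‖u‖ ^ 2)) := by ring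
      _ ≤ (A + 2 * b * A) * ((1 + 1 * ‖u‖ ^ 2) * Real.exp (-b * ‖u‖ ^ 2)) := by
          gcongr <;> positivity
      _ ≤ (A + 2 * b * A) * ((1 + 1 * (b/2)⁻¹) * Real.exp (-(b/2) * ‖u‖ ^ 2)) := by
          gcongr
      _ = _ := by ring
  have hG : ∀ y, HasFDerivAt (fun y => ∫ z, A * Real.exp (-b * ‖z - y‖ ^ 2) * f z)
      (∫ z, (-f z) • P' (z - y)) y :=
    sg_deriv f F hf hfb _ P' (sg_exp_deriv A b) hP'c hb2 hPb hP'b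
  have hP'i : ∀ y, Integrable (fun z => (-f z) • P' (z - y)) := by
    intro y
    have h1 : Integrable P' := sg_int_of_bound hb2 hP'c.aestronglyMeasurable hP'b
    exact (h1.comp_sub_right y).bdd_smul F hf.neg.aestronglyMeasurable
      (Filter.Eventually.of_forall fun z => by simpa using hfb z)
  unfold gradient
  rw [← map_sub, LinearIsometryEquiv.norm_map, (hG x).fderiv, (hG x').fderiv]
  refine ContinuousLinearMap.opNorm_le_bound _ (by positivity) fun v => ?_
  have hDv : ∀ y, (∫ z, (-f z) • P' (z - y)) v =
      ∫ z, 2 * b * (A * Real.exp (-b * ‖z - y‖ ^ 2)) * inner ℝ (z - y) v * f z := by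
    intro y
    rw [ContinuousLinearMap.integral_apply (hP'i y)]
    congr 1; ext z
    simp [hP', inner_sub_left]
    ring
  rw [sub_apply, hDv, hDv]
  -- second derivative
  set Q' : (EuclideanSpace ℝ (Fin d)) → (EuclideanSpace ℝ (Fin d)) →L[ℝ] ℝ := fun u => (2 * b * (A * Real.exp (-b * ‖u‖ ^ 2))) •
        (innerSL ℝ v - (2 * b * inner ℝ u v) • innerSL ℝ u) with hQ'
  have hQ'c : Continuous Q' := by
    have h1 : Continuous fun u : EuclideanSpace ℝ (Fin d) => 2 * b * (A * Real.exp (-b * ‖u‖ ^ 2)) := by fun_prop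
    have h2 : Continuous fun u : EuclideanSpace ℝ (Fin d) => 2 * b * inner ℝ u v := by fun_prop
    exact h1.smul (continuous_const.sub (h2.smul (innerSL ℝ).continuous))
  have hQ'b : ∀ u, ‖Q' u‖ ≤ ((2 * b * A * ‖v‖) * (1 + (1 + 2 * b) * (b/2)⁻¹)) *
      Real.exp (-(b/2) * ‖u‖ ^ 2) := by
    intro u
    have h1 := sg_poly2 hb zero_le_one (by positivity : 0 ≤ 1 + 2 * b) u
    have h2 : ‖innerSL ℝ v - (2 * b * inner ℝ u v) • innerSL ℝ u‖ ≤
        ‖v‖ * (1 + (1 + 2 * b) * ‖u‖ ^ 2) := by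
      refine (norm_sub_le _ _).trans ?_
      rw [norm_smul, innerSL_apply_norm, innerSL_apply_norm, Real.norm_eq_abs, abs_mul,
        abs_of_pos (by positivity : 0 < 2 * b)]
      have h3 := abs_real_inner_le_norm u v
      have h4 : 2 * b * |inner ℝ u v| * ‖u‖ ≤ 2 * b * (‖u‖ * ‖v‖) * ‖u‖ := by gcongr
      nlinarith [mul_nonneg (norm_nonneg v) (sq_nonneg ‖u‖)]
    rw [hQ']
    simp only
    rw [norm_smul, Real.norm_eq_abs, abs_of_nonneg (by positivity)]
    calc _ ≤ 2 * b * (A * Real.exp (-b * ‖u‖ ^ 2)) * (‖v‖ * (1 + (1 + 2 * b) * ‖u‖ ^ 2)) := by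
          gcongr
      _ = (2 * b * A * ‖v‖) * ((1 + (1 + 2 * b) * ‖u‖ ^ 2) * Real.exp (-b * ‖u‖ ^ 2)) := by ring
      _ ≤ (2 * b * A * ‖v‖) * ((1 + (1 + 2 * b) * (b/2)⁻¹) * Real.exp (-(b/2) * ‖u‖ ^ 2)) := by
          gcongr
      _ = _ := by ring
  have hQb : ∀ u : EuclideanSpace ℝ (Fin d), |2 * b * (A * Real.exp (-b * ‖u‖ ^ 2)) * inner ℝ u v| ≤
      ((2 * b * A * ‖v‖) * (1 + (1 + 2 * b) * (b/2)⁻¹)) * Real.exp (-(b/2) * ‖u‖ ^ 2) := by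
    intro u
    have h1 := sg_poly2 hb zero_le_one (by positivity : 0 ≤ 1 + 2 * b) u
    have h2 : |inner ℝ u v| ≤ ‖v‖ * (1 + (1 + 2 * b) * ‖u‖ ^ 2) := by
      refine (abs_real_inner_le_norm u v).trans ?_
      rw [mul_comm]
      have : 0 ≤ 2 * b * ‖u‖ ^ 2 := by positivity
      gcongr
      linarith [hu u]
    rw [abs_mul, abs_of_nonneg (by positivity : 0 ≤ 2 * b * (A * Real.exp (-b * ‖u‖ ^ 2)))]
    calc _ ≤ 2 * b * (A * Real.exp (-b * ‖u‖ ^ 2)) * (‖v‖ * (1 + (1 + 2 * b) * ‖u‖ ^ 2)) := by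
          gcongr
      _ = (2 * b * A * ‖v‖) * ((1 + (1 + 2 * b) * ‖u‖ ^ 2) * Real.exp (-b * ‖u‖ ^ 2)) := by ring
      _ ≤ (2 * b * A * ‖v‖) * ((1 + (1 + 2 * b) * (b/2)⁻¹) * Real.exp (-(b/2) * ‖u‖ ^ 2)) := by
          gcongr
      _ = _ := by ring
  have hH : ∀ y, HasFDerivAt (fun y => ∫ z, 2 * b * (A * Real.exp (-b * ‖z - y‖ ^ 2)) *
      inner ℝ (z - y) v * f z) (∫ z, (-f z) • Q' (z - y)) y :=
    sg_deriv f F hf hfb _ Q' (sg_q_deriv A b v) hQ'c hb2 hQb hQ'b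
  have hQ'int : Integrable Q' := sg_int_of_bound hb2 hQ'c.aestronglyMeasurable hQ'b
  have hQ'i : ∀ y, Integrable (fun z => (-f z) • Q' (z - y)) := by
    intro y
    exact (hQ'int.comp_sub_right y).bdd_smul F hf.neg.aestronglyMeasurable
      (Filter.Eventually.of_forall fun z => by simpa using hfb z)
  have hbound : ∀ y, ‖∫ z, (-f z) • Q' (z - y)‖ ≤ 4 * b * F * ‖v‖ := by
    intro y
    refine ContinuousLinearMap.opNorm_le_bound _ (by positivity) fun h => ?_
    rw [ContinuousLinearMap.integral_apply (hQ'i y)]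
    have hdom : Integrable (fun u : EuclideanSpace ℝ (Fin d) => F * ((2 * b * A) * (‖v‖ * ‖h‖ * Real.exp (-b * ‖u‖ ^ 2)
        + 2 * b * (|inner ℝ u v * inner ℝ u h| * Real.exp (-b * ‖u‖ ^ 2))))) :=
      ((((sg_int_exp hb).const_mul _).add ((sg_int_sq hb v h).const_mul _)).const_mul _).const_mul _
    refine (norm_integral_le_of_norm_le (hdom.comp_sub_right y)
      (Filter.Eventually.of_forall fun z => ?_)).trans ?_
    · rw [smul_apply, norm_smul, norm_neg]
      refine mul_le_mul (hfb z) ?_ (norm_nonneg _) hF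
      simp only [hQ']
      generalize z - y = u
      rw [smul_apply, sub_apply, smul_apply, norm_smul, Real.norm_eq_abs,
        abs_of_nonneg (by positivity : 0 ≤ 2 * b * (A * Real.exp (-b * ‖u‖ ^ 2)))]
      simp only [innerSL_apply_apply, smul_eq_mul, Real.norm_eq_abs]
      have h2 : |inner ℝ v h - 2 * b * inner ℝ u v * inner ℝ u h| ≤
          ‖v‖ * ‖h‖ + 2 * b * |inner ℝ u v * inner ℝ u h| := by
        refine (abs_sub _ _).trans ?_
        rw [mul_assoc (2 * b), abs_mul (2 * b), abs_of_pos (by positivity : 0 < 2 * b)]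
        gcongr
        exact abs_real_inner_le_norm _ _
      calc _ ≤ 2 * b * (A * Real.exp (-b * ‖u‖ ^ 2)) *
            (‖v‖ * ‖h‖ + 2 * b * |inner ℝ u v * inner ℝ u h|) := by gcongr
        _ = _ := by ring
    · rw [integral_sub_right_eq_self (μ := volume) (fun u : EuclideanSpace ℝ (Fin d) => F * ((2 * b * A) *
        (‖v‖ * ‖h‖ * Real.exp (-b * ‖u‖ ^ 2)
        + 2 * b * (|inner ℝ u v * inner ℝ u h| * Real.exp (-b * ‖u‖ ^ 2))))) y,
        integral_const_mul, integral_const_mul, integral_add ((sg_int_exp hb).const_mul _)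
        ((sg_int_sq hb v h).const_mul _), integral_const_mul, integral_const_mul]
      have h3 := sg_cross hb v h
      calc _ ≤ F * (2 * b * A * (‖v‖ * ‖h‖ * (∫ u : EuclideanSpace ℝ (Fin d), Real.exp (-b * ‖u‖ ^ 2)) +
            ‖v‖ * ‖h‖ * (∫ u : EuclideanSpace ℝ (Fin d), Real.exp (-b * ‖u‖ ^ 2)))) := by gcongr
        _ = 4 * b * F * ‖v‖ * ‖h‖ * (A * (∫ u : EuclideanSpace ℝ (Fin d), Real.exp (-b * ‖u‖ ^ 2))) := by ring
        _ = _ := by rw [hAZ, mul_one]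
  have hfin := Convex.norm_image_sub_le_of_norm_hasFDerivWithin_le (s := Set.univ)
    (fun y _ => (hH y).hasFDerivWithinAt) (fun y _ => hbound y) convex_univ
    (Set.mem_univ x') (Set.mem_univ x)
  refine hfin.trans (le_of_eq ?_)
  ring

end main

/-- For `f : ℝ^d → ℝ` measurable with `sup |f| = F < ∞` and `σ > 0`, the
gradient `g` of the Gaussian-smoothed function `F_σ(x) = ∫ f(z) dN(x, σ²I)(z)` (i.e. the
Smooth Gradient) is globally Lipschitz with constant at most `2F/σ²`:
`‖g(x) − g(x')‖₂ ≤ (2F/σ²)·‖x − x'‖₂`. -/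
theorem smoothgrad_globally_robust {d : ℕ} (f : EuclideanSpace ℝ (Fin d) → ℝ)
    (σ F : ℝ) (hσ : 0 < σ) (hf : Measurable f) (hfb : ∀ z, |f z| ≤ F) :
    ∀ x x' : EuclideanSpace ℝ (Fin d),
      ‖gradient (fun y => ∫ z, gaussDensity σ (z - y) * f z) x -
          gradient (fun y => ∫ z, gaussDensity σ (z - y) * f z) x'‖ ≤
        2 * F / σ ^ 2 * ‖x - x'‖ := by
  intro x x'
  set b : ℝ := 1 / (2 * σ ^ 2) with hb
  set A : ℝ := (2 * Real.pi * σ ^ 2) ^ (-(d : ℝ) / 2) with hA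
  have hb0 : 0 < b := by positivity
  have hA0 : 0 ≤ A := by positivity
  have hg : ∀ u : EuclideanSpace ℝ (Fin d),
      gaussDensity σ u = A * Real.exp (-b * ‖u‖ ^ 2) := by
    intro u
    rw [gaussDensity, ← hA, hb]
    congr 2
    ring
  have hAZ : A * (∫ u : EuclideanSpace ℝ (Fin d), Real.exp (-b * ‖u‖ ^ 2)) = 1 := by
    rw [GaussianFourier.integral_rexp_neg_mul_sq_norm hb0, finrank_euclideanSpace_fin,
      show Real.pi / b = 2 * Real.pi * σ ^ 2 by rw [hb]; field_simp, hA,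
      ← Real.rpow_add (by positivity)]
    rw [show -(d : ℝ) / 2 + (d : ℝ) / 2 = 0 by ring, Real.rpow_zero]
  simp only [hg]
  refine (sg_main f A b F hA0 hb0 hAZ hf hfb x x').trans (le_of_eq ?_)
  rw [hb]
  field_simp
  ring
end

section
/- Let f : ℝ^d → ℝ (Euclidean space) be measurable and bounded, and let σ > 0. Then the smoothed function F_σ(x) = ∫ f(z) dN(x, σ²I)(z) is twice differentiable, and its Hessian at x, viewed as a bilinear form, satisfies for all u, v ∈ ℝ^d: D²F_σ(x)[u, v] = σ^(−4) ∫ ( ⟨u, z − x⟩·⟨v, z − x⟩ − σ²·⟨u, v⟩ ) f(z) dN(x, σ²I)(z); equivalently, the Hessian matrix equals σ^(−4) E_{z ∼ N(x, σ²I)}[ ((z − x)(z − x)ᵀ − σ²I) f(z) ]. -/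
open MeasureTheory Metric RealInnerProductSpace

/-- Real isotropic Gaussians are integrable. -/
lemma sfh_integrable_exp {d : ℕ} {a : ℝ} (ha : 0 < a) (x : EuclideanSpace ℝ (Fin d)) :
    Integrable (fun z : EuclideanSpace ℝ (Fin d) => Real.exp (-a * ‖z - x‖ ^ 2)) := by
  have h := (GaussianFourier.integrable_cexp_neg_mul_sq_norm_add
    (V := EuclideanSpace ℝ (Fin d)) (b := (a : ℂ)) (by simpa using ha) 0 0).norm
  have h2 : Integrable (fun z : EuclideanSpace ℝ (Fin d) => Real.exp (-a * ‖z‖ ^ 2)) := by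
    refine h.congr (Filter.Eventually.of_forall fun z => ?_)
    simp only [Complex.norm_exp]
    congr 1
    simp [← Complex.ofReal_pow]
  exact h2.comp_sub_right x

lemma sfh_bound {d : ℕ} {a : ℝ} (ha : 0 < a) {x y z : EuclideanSpace ℝ (Fin d)}
    (hy : y ∈ ball x 1) :
    Real.exp (-a * ‖z - y‖ ^ 2) ≤ Real.exp a * Real.exp (-(a / 2) * ‖z - x‖ ^ 2) := by
  rw [← Real.exp_add, Real.exp_le_exp]
  have h1 : ‖y - x‖ < 1 := by simpa [dist_eq_norm] using hy
  have h2 : ‖z - x‖ ≤ ‖z - y‖ + ‖y - x‖ := norm_sub_le_norm_sub_add_norm_sub z y x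
  have h3 : ‖z - x‖ ^ 2 ≤ 2 * ‖z - y‖ ^ 2 + 2 := by
    have h4 : ‖z - x‖ ≤ ‖z - y‖ + 1 := by linarith
    nlinarith [norm_nonneg (z - x), norm_nonneg (z - y), sq_nonneg (‖z - y‖ - 1)]
  nlinarith

/-- Differentiation under the integral sign for a kernel with Gaussian decay. -/
lemma sfh_conv {d : ℕ} {H : Type*} [NormedAddCommGroup H] [NormedSpace ℝ H]
    (f : EuclideanSpace ℝ (Fin d) → ℝ) (hf : Measurable f) (C : ℝ) (hfb : ∀ z, |f z| ≤ C)
    (G : EuclideanSpace ℝ (Fin d) → H)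
    (G' : EuclideanSpace ℝ (Fin d) → EuclideanSpace ℝ (Fin d) →L[ℝ] H)
    (hG : ∀ w, HasFDerivAt G (G' w) w) (hG' : Continuous G') (a K : ℝ) (ha : 0 < a)
    (hb : ∀ w, ‖G w‖ ≤ K * Real.exp (-a * ‖w‖ ^ 2))
    (hb' : ∀ w, ‖G' w‖ ≤ K * Real.exp (-a * ‖w‖ ^ 2)) (x : EuclideanSpace ℝ (Fin d)) :
    Integrable (fun z => f z • -(G' (z - x))) ∧
    HasFDerivAt (fun y => ∫ z, f z • G (z - y)) (∫ z, f z • -(G' (z - x))) x := by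
  have hC : 0 ≤ C := (abs_nonneg _).trans (hfb 0)
  have hK : 0 ≤ K := by
    have := (norm_nonneg _).trans (hb 0)
    simpa using this
  have hGc : Continuous G := continuous_iff_continuousAt.2 fun w => (hG w).continuousAt
  have m1 : ∀ y, AEStronglyMeasurable (fun z => f z • G (z - y)) volume := fun y =>
    hf.aestronglyMeasurable.smul
      (hGc.comp (continuous_id.sub continuous_const)).aestronglyMeasurable
  have m2 : AEStronglyMeasurable (fun z => f z • -(G' (z - x))) volume :=
    hf.aestronglyMeasurable.smul
      (hG'.comp (continuous_id.sub continuous_const)).neg.aestronglyMeasurable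
  have i0 : Integrable (fun z : EuclideanSpace ℝ (Fin d) =>
      C * (K * Real.exp (-a * ‖z - x‖ ^ 2))) :=
    ((sfh_integrable_exp ha x).const_mul K).const_mul C
  have i1 : Integrable (fun z => f z • -(G' (z - x))) := by
    refine i0.mono' m2 (Filter.Eventually.of_forall fun z => ?_)
    rw [norm_smul, norm_neg]
    exact mul_le_mul (hfb z) (hb' _) (norm_nonneg _) hC
  have i2 : Integrable (fun z => f z • G (z - x)) := by
    refine i0.mono' (m1 x) (Filter.Eventually.of_forall fun z => ?_)
    rw [norm_smul]
    exact mul_le_mul (hfb z) (hb _) (norm_nonneg _) hC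
  refine ⟨i1, ?_⟩
  refine hasFDerivAt_integral_of_dominated_of_fderiv_le (𝕜 := ℝ)
    (F := fun y z => f z • G (z - y)) (F' := fun y z => f z • -(G' (z - y)))
    (bound := fun z => C * (K * (Real.exp a * Real.exp (-(a / 2) * ‖z - x‖ ^ 2))))
    (ball_mem_nhds x one_pos) (Filter.Eventually.of_forall m1) i2 m2 ?_ ?_ ?_
  · refine Filter.Eventually.of_forall fun z y hy => ?_
    rw [norm_smul, norm_neg]
    refine mul_le_mul (hfb z) ((hb' _).trans ?_) (norm_nonneg _) hC
    exact mul_le_mul_of_nonneg_left (sfh_bound ha hy) hK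
  · exact (((sfh_integrable_exp (half_pos ha) x).const_mul _).const_mul K).const_mul C
  · refine Filter.Eventually.of_forall fun z y _ => ?_
    have h1 : HasFDerivAt (fun y : EuclideanSpace ℝ (Fin d) => z - y)
        (-(ContinuousLinearMap.id ℝ (EuclideanSpace ℝ (Fin d)))) y :=
      (hasFDerivAt_id y).const_sub z
    have h2 := ((hG (z - y)).comp y h1).const_smul (f z)
    convert! h2 using 1
    ext v
    simp

/-- The real inner product as a continuous bilinear map. -/
noncomputable def sfhJ (d : ℕ) :
    EuclideanSpace ℝ (Fin d) →L[ℝ] EuclideanSpace ℝ (Fin d) →L[ℝ] ℝ := innerSL ℝ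

lemma sfhJ_apply {d : ℕ} (u v : EuclideanSpace ℝ (Fin d)) : sfhJ d u v = ⟪u, v⟫ := rfl

lemma sfhJ_norm {d : ℕ} (u : EuclideanSpace ℝ (Fin d)) : ‖sfhJ d u‖ = ‖u‖ :=
  innerSL_apply_norm ℝ u

lemma sfhJ_norm_le (d : ℕ) : ‖sfhJ d‖ ≤ 1 :=
  ContinuousLinearMap.opNorm_le_bound _ zero_le_one fun u => by rw [sfhJ_norm, one_mul]

/-- First derivative of the density. -/
noncomputable def sfhG1 {d : ℕ} (σ : ℝ) (w : EuclideanSpace ℝ (Fin d)) :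
    EuclideanSpace ℝ (Fin d) →L[ℝ] ℝ :=
  (-(σ ^ 2)⁻¹ * gaussDensity σ w) • sfhJ d w

/-- Second derivative of the density. -/
noncomputable def sfhG2 {d : ℕ} (σ : ℝ) (w : EuclideanSpace ℝ (Fin d)) :
    EuclideanSpace ℝ (Fin d) →L[ℝ] EuclideanSpace ℝ (Fin d) →L[ℝ] ℝ :=
  (-(σ ^ 2)⁻¹ * gaussDensity σ w) • sfhJ d +
    ((-(σ ^ 2)⁻¹) • sfhG1 σ w).smulRight (sfhJ d w)

lemma sfh_hasFDerivAt {d : ℕ} {σ : ℝ} (hσ : 0 < σ) (w : EuclideanSpace ℝ (Fin d)) :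
    HasFDerivAt (gaussDensity σ) (sfhG1 σ w) w := by
  have h1 := (hasFDerivAt_id (𝕜 := ℝ) w).norm_sq
  have h2 := ((h1.const_mul (-(2 * σ ^ 2)⁻¹)).exp).const_mul
    ((2 * Real.pi * σ ^ 2) ^ (-(d : ℝ) / 2))
  have e : (gaussDensity σ : EuclideanSpace ℝ (Fin d) → ℝ) = fun w =>
      (2 * Real.pi * σ ^ 2) ^ (-(d : ℝ) / 2) * Real.exp (-(2 * σ ^ 2)⁻¹ * ‖id w‖ ^ 2) := by
    funext w
    simp only [gaussDensity, id]
    congr 2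
    ring
  have e2 := congrFun e w
  rw [e]
  refine h2.congr_fderiv ?_
  ext v
  simp only [sfhG1, e2]
  simp [sfhJ_apply]
  field_simp

lemma sfh_continuous {d : ℕ} {σ : ℝ} (hσ : 0 < σ) :
    Continuous (gaussDensity σ : EuclideanSpace ℝ (Fin d) → ℝ) :=
  continuous_iff_continuousAt.2 fun w => (sfh_hasFDerivAt hσ w).continuousAt

lemma sfh_hasFDerivAt1 {d : ℕ} {σ : ℝ} (hσ : 0 < σ) (w : EuclideanSpace ℝ (Fin d)) :
    HasFDerivAt (sfhG1 σ) (sfhG2 σ w) w :=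
  ((sfh_hasFDerivAt hσ w).const_mul (-(σ ^ 2)⁻¹)).smul (sfhJ d).hasFDerivAt

lemma sfh_continuous1 {d : ℕ} {σ : ℝ} (hσ : 0 < σ) :
    Continuous (sfhG1 σ : EuclideanSpace ℝ (Fin d) → _) :=
  continuous_iff_continuousAt.2 fun w => (sfh_hasFDerivAt1 hσ w).continuousAt

set_option synthInstance.maxHeartbeats 400000 in
lemma sfh_continuous2 {d : ℕ} {σ : ℝ} (hσ : 0 < σ) :
    Continuous (sfhG2 σ : EuclideanSpace ℝ (Fin d) → _) := by
  have h0 := sfh_continuous (d := d) hσ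
  have h1 := sfh_continuous1 (d := d) hσ
  have h3 : Continuous fun w : EuclideanSpace ℝ (Fin d) =>
      ContinuousLinearMap.smulRightL ℝ _ _ ((-(σ ^ 2)⁻¹) • sfhG1 σ w) (sfhJ d w) := by
    fun_prop
  exact ((continuous_const.mul h0).smul continuous_const).add h3

lemma sfh_norm_aux {E F : Type*} [NormedAddCommGroup E] [NormedSpace ℝ E]
    [NormedAddCommGroup F] [NormedSpace ℝ F] (c : ℝ) (A : E →L[ℝ] F) (B : E →L[ℝ] ℝ) (b : F) :
    ‖c • A + B.smulRight b‖ ≤ ‖c‖ * ‖A‖ + ‖B‖ * ‖b‖ := by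
  refine (norm_add_le _ _).trans ?_
  rw [ContinuousLinearMap.norm_smulRight_apply, norm_smul]

set_option synthInstance.maxHeartbeats 400000 in
lemma sfh_decay {d : ℕ} {σ : ℝ} (hσ : 0 < σ) : ∃ K a : ℝ, 0 < a ∧ 
    ∀ w : EuclideanSpace ℝ (Fin d), ‖gaussDensity σ w‖ ≤ K * Real.exp (-a * ‖w‖ ^ 2) ∧
      ‖sfhG1 σ w‖ ≤ K * Real.exp (-a * ‖w‖ ^ 2) ∧
      ‖sfhG2 σ w‖ ≤ K * Real.exp (-a * ‖w‖ ^ 2) := by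
  set s : ℝ := (σ ^ 2)⁻¹ with hs
  have hs0 : 0 < s := by positivity
  set c : ℝ := (2 * Real.pi * σ ^ 2) ^ (-(d : ℝ) / 2) with hc
  have hc0 : 0 < c := by positivity
  have key : ∀ w : EuclideanSpace ℝ (Fin d), gaussDensity σ w * (1 + ‖w‖ ^ 2) ≤
      c * (1 + 4 / s) * Real.exp (-(s / 4) * ‖w‖ ^ 2) := by
    intro w
    have e : gaussDensity σ w = c * (Real.exp (-(s / 4) * ‖w‖ ^ 2) *
        Real.exp (-(s / 4 * ‖w‖ ^ 2))) := by
      rw [← Real.exp_add, gaussDensity]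
      congr 2
      rw [hs]
      field_simp
      ring
    have h1 : 1 + ‖w‖ ^ 2 ≤ (1 + 4 / s) * Real.exp (s / 4 * ‖w‖ ^ 2) := by
      have h2 := Real.add_one_le_exp (s / 4 * ‖w‖ ^ 2)
      have h3 : (1 + 4 / s) * (s / 4 * ‖w‖ ^ 2 + 1) =
        1 + ‖w‖ ^ 2 + (s / 4 * ‖w‖ ^ 2 + 4 / s) := by field_simp; ring
      have h4 : 0 ≤ s / 4 * ‖w‖ ^ 2 + 4 / s := by positivity
      have h5 := mul_le_mul_of_nonneg_left h2 (show 0 ≤ 1 + 4 / s by positivity)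
      linarith
    calc gaussDensity σ w * (1 + ‖w‖ ^ 2) 
        ≤ gaussDensity σ w * ((1 + 4 / s) * Real.exp (s / 4 * ‖w‖ ^ 2)) :=
          mul_le_mul_of_nonneg_left h1 (by rw [e]; positivity)
      _ = _ := by
          rw [e, Real.exp_neg (s / 4 * ‖w‖ ^ 2)]
          field_simp
  refine ⟨(1 + s + s ^ 2) * (c * (1 + 4 / s)), s / 4, by positivity, fun w => ?_⟩
  have hg : 0 ≤ gaussDensity σ w := by unfold gaussDensity; positivity
  have hk := key w
  set g := gaussDensity σ w with hgdef
  have hk' : (1 + s + s ^ 2) * (g * (1 + ‖w‖ ^ 2)) ≤ (1 + s + s ^ 2) * (c * (1 + 4 / s)) *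
      Real.exp (-(s / 4) * ‖w‖ ^ 2) := by
    rw [mul_assoc]
    exact mul_le_mul_of_nonneg_left hk (by positivity)
  have n1 : ‖sfhG1 σ w‖ = s * g * ‖w‖ := by
    rw [sfhG1, norm_smul, sfhJ_norm, ← hs, ← hgdef, norm_mul, norm_neg,
      Real.norm_of_nonneg hs0.le, Real.norm_of_nonneg hg]
  have n2 : ‖sfhG2 σ w‖ ≤ s * g + s ^ 2 * g * ‖w‖ ^ 2 := by
    refine (sfh_norm_aux _ _ _ _).trans ?_
    rw [norm_smul, n1, sfhJ_norm, ← hs,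
      ← hgdef, norm_mul, norm_neg, Real.norm_of_nonneg hs0.le, Real.norm_of_nonneg hg]
    have := mul_le_mul_of_nonneg_left (sfhJ_norm_le d) (show 0 ≤ s * g by positivity)
    linarith
  have p1 : 0 ≤ s * g := by positivity
  have p2 : 0 ≤ s ^ 2 * g := by positivity
  have p3 : 0 ≤ g * ‖w‖ ^ 2 := by positivity
  have p4 : 0 ≤ s * g * ‖w‖ ^ 2 := by positivity
  have p5 : 0 ≤ s ^ 2 * g * ‖w‖ ^ 2 := by positivity
  refine ⟨le_trans ?_ hk', le_trans ?_ hk', n2.trans (le_trans ?_ hk')⟩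
  · rw [Real.norm_of_nonneg hg]; linarith
  · rw [n1]
    have : s * g * ‖w‖ ≤ s * g * (1 + ‖w‖ ^ 2) :=
      mul_le_mul_of_nonneg_left (by nlinarith [sq_nonneg (‖w‖ - 1)]) p1
    linarith
  · linarith

/-- For `f : ℝ^d → ℝ` measurable and bounded and `σ > 0`, the smoothed
function `F_σ(x) = ∫ f(z) dN(x, σ²I)(z)` is twice differentiable, and its Hessian at `x`,
as a bilinear form, satisfies
`D²F_σ(x)[u, v] = σ⁻⁴ ∫ (⟨u, z − x⟩⟨v, z − x⟩ − σ²⟨u, v⟩) f(z) dN(x, σ²I)(z)`. -/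
theorem smoothed_function_hessian {d : ℕ} (f : EuclideanSpace ℝ (Fin d) → ℝ)
    (σ : ℝ) (hσ : 0 < σ) (hf : Measurable f) (C : ℝ) (hfb : ∀ z, |f z| ≤ C) :
    (Differentiable ℝ (fun y : EuclideanSpace ℝ (Fin d) => ∫ z, gaussDensity σ (z - y) * f z) ∧
      Differentiable ℝ
        (fderiv ℝ (fun y : EuclideanSpace ℝ (Fin d) => ∫ z, gaussDensity σ (z - y) * f z))) ∧
    ∀ (x u v : EuclideanSpace ℝ (Fin d)),
      fderiv ℝ (fderiv ℝ (fun y => ∫ z, gaussDensity σ (z - y) * f z)) x u v =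
        (σ ^ 4)⁻¹ *
          ∫ z, gaussDensity σ (z - x) *
            ((⟪u, z - x⟫ * ⟪v, z - x⟫ - σ ^ 2 * ⟪u, v⟫) * f z) := by
  obtain ⟨K, a, ha, hK⟩ := sfh_decay (d := d) hσ
  have e0 : (fun y : EuclideanSpace ℝ (Fin d) => ∫ z, gaussDensity σ (z - y) * f z) =
      fun y => ∫ z, f z • gaussDensity σ (z - y) := by
    funext y
    simp only [smul_eq_mul, mul_comm]
  have A := sfh_conv f hf C hfb (gaussDensity σ) (sfhG1 σ) (sfh_hasFDerivAt hσ)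
    (sfh_continuous1 hσ) a K ha (fun w => (hK w).1) (fun w => (hK w).2.1)
  have hc2 : Continuous (fun w : EuclideanSpace ℝ (Fin d) => -sfhG2 σ w) := by
    have h := (sfh_continuous2 (d := d) hσ).const_smul (-1 : ℝ)
    exact h.congr fun w => neg_one_smul ℝ (sfhG2 σ w)
  have B := sfh_conv f hf C hfb (fun w => -sfhG1 σ w) (fun w => -sfhG2 σ w)
    (fun w => (sfh_hasFDerivAt1 hσ w).neg)
    hc2 a K ha (fun w => by rw [norm_neg]; exact (hK w).2.1)
    (fun w => by rw [norm_neg]; exact (hK w).2.2)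
  have e1 : fderiv ℝ (fun y : EuclideanSpace ℝ (Fin d) => ∫ z, gaussDensity σ (z - y) * f z) =
      fun y => ∫ z, f z • -(sfhG1 σ (z - y)) := by
    funext y
    rw [e0]
    exact (A y).2.fderiv
  refine ⟨⟨?_, ?_⟩, fun x u v => ?_⟩
  · rw [e0]
    exact fun y => (A y).2.differentiableAt
  · rw [e1]
    exact fun y => (B y).2.differentiableAt
  · rw [e1, (B x).2.fderiv, ContinuousLinearMap.integral_apply (B x).1,
      ContinuousLinearMap.integral_apply ((B x).1.apply_continuousLinearMap u),
      ← integral_const_mul]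
    congr 1
    funext z
    simp only [sfhG2, sfhG1, neg_neg, smul_apply,
      add_apply, ContinuousLinearMap.smulRight_apply, sfhJ_apply, smul_eq_mul]
    rw [real_inner_comm u (z - x), real_inner_comm v (z - x)]
    field_simp
    ring
end
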